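/- arXiv:0801.2567 — 3 statements merged into one kernel-verified Lean document; each statement's English description precedes it below -/
import Mathlib

section
/- Let A be an associative unital k-algebra with a symmetric Frobenius structure (Δ, ε). Then the k-linear map R₂ = (μ⊗id)∘(id⊗τ)∘(Δ⊗id) : A⊗A → A⊗A satisfies the Yang–Baxter equation: (R₂⊗id)∘(id⊗R₂)∘(R₂⊗id) = (id⊗R₂)∘(R₂⊗id)∘(id⊗R₂). -/
open TensorProduct

noncomputable section

variable (k A : Type*) [Field k] [Ring A] [Algebra k A]

/-- Multiplication `μ : A ⊗[k] A → A` as a `k`-linear map. -/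
def mu : A ⊗[k] A →ₗ[k] A := LinearMap.mul' k A

/-- The standard associator `(A⊗A)⊗A ≃ A⊗(A⊗A)`. -/
def asso : ((A ⊗[k] A) ⊗[k] A) ≃ₗ[k] (A ⊗[k] (A ⊗[k] A)) := TensorProduct.assoc k A A A

/-- The flip `τ : A⊗A → A⊗A`, `x⊗y ↦ y⊗x`. -/
def tau : A ⊗[k] A →ₗ[k] A ⊗[k] A := (TensorProduct.comm k A A).toLinearMap

/-- A Frobenius structure on `A`: a coassociative comultiplication `Δ` satisfying the two
Frobenius compatibility conditions `Δ∘μ = (μ⊗id)∘(id⊗Δ) = (id⊗μ)∘(Δ⊗id)`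
(composites taken with the standard associator identifications). -/
def IsFrobenius (Δ : A →ₗ[k] A ⊗[k] A) : Prop :=
  (Δ.rTensor A ∘ₗ Δ = (asso k A).symm.toLinearMap ∘ₗ Δ.lTensor A ∘ₗ Δ) ∧
  (Δ ∘ₗ mu k A = (mu k A).rTensor A ∘ₗ (asso k A).symm.toLinearMap ∘ₗ Δ.lTensor A) ∧
  (Δ ∘ₗ mu k A = (mu k A).lTensor A ∘ₗ (asso k A).toLinearMap ∘ₗ Δ.rTensor A)

/-- `R : A⊗A → A⊗A` satisfies the Yang–Baxter equation:
`(R⊗id)∘(id⊗R)∘(R⊗id) = (id⊗R)∘(R⊗id)∘(id⊗R)` on `A⊗A⊗A`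
(with the standard associator identifications). -/
def YBE (R : A ⊗[k] A →ₗ[k] A ⊗[k] A) : Prop :=
  R.rTensor A ∘ₗ
      ((asso k A).symm.toLinearMap ∘ₗ R.lTensor A ∘ₗ (asso k A).toLinearMap) ∘ₗ
      R.rTensor A =
    ((asso k A).symm.toLinearMap ∘ₗ R.lTensor A ∘ₗ (asso k A).toLinearMap) ∘ₗ
      R.rTensor A ∘ₗ
      ((asso k A).symm.toLinearMap ∘ₗ R.lTensor A ∘ₗ (asso k A).toLinearMap)

/-- `ε` is a counit for `Δ`: `(ε⊗id)∘Δ = id = (id⊗ε)∘Δ`. -/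
def IsCounit (Δ : A →ₗ[k] A ⊗[k] A) (ε : A →ₗ[k] k) : Prop :=
  (TensorProduct.lid k A).toLinearMap ∘ₗ ε.rTensor A ∘ₗ Δ = LinearMap.id ∧
  (TensorProduct.rid k A).toLinearMap ∘ₗ ε.lTensor A ∘ₗ Δ = LinearMap.id

/-- The Frobenius structure `(Δ, ε)` is symmetric: `ε(xy) = ε(yx)` for all `x, y`, and the
copairing is symmetric, `τ(Δ(1)) = Δ(1)`. -/
def IsSymmetric (Δ : A →ₗ[k] A ⊗[k] A) (ε : A →ₗ[k] k) : Prop :=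
  (∀ x y : A, ε (x * y) = ε (y * x)) ∧ tau k A (Δ 1) = Δ 1

/-!
Put `e = Δ 1`. The two Frobenius conditions say `Δ x = (x ⊗ 1) e = e (1 ⊗ x)`, so that
`R₂ (x ⊗ y) = e (y ⊗ x)`: the map `R₂` is the flip followed by multiplication by `e`. For a map of
this shape the Yang–Baxter equation amounts to `e₁₂ e₁₃ e₂₃ = e₂₃ e₁₃ e₁₂` in `A ⊗ A ⊗ A`. Since the
copairing `e` is symmetric, the Frobenius conditions give `e w = τ(w) e` for all `w`, hence
`e₁₂ (e₁₃ e₂₃) = (e₂₃ e₁₃) e₁₂`.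
-/

section YangBaxterEquation

variable {R M : Type*} [CommSemiring R] [AddCommMonoid M] [Module R M]

/-- The Yang–Baxter equation for an endomorphism `T` of `M ⊗ M`, in its braid form, with the
threefold tensor power bracketed to the left. -/
def IsYangBaxter (T : M ⊗[R] M →ₗ[R] M ⊗[R] M) : Prop :=
  let T₁₂ := T.rTensor M
  let T₂₃ := (TensorProduct.assoc R M M M).symm.toLinearMap ∘ₗ T.lTensor M ∘ₗ
    (TensorProduct.assoc R M M M).toLinearMap
  T₁₂ ∘ₗ T₂₃ ∘ₗ T₁₂ = T₂₃ ∘ₗ T₁₂ ∘ₗ T₂₃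

end YangBaxterEquation

section Algebra

variable {R B : Type*} [CommSemiring R] [Semiring B] [Algebra R B]

/-- The embedding `w ↦ w₁₂` of `B ⊗ B` into the first two factors of `B ⊗ B ⊗ B`. -/
def leg₁₂ : B ⊗[R] B →ₐ[R] (B ⊗[R] B) ⊗[R] B :=
  Algebra.TensorProduct.includeLeft

/-- The embedding `w ↦ w₁₃` of `B ⊗ B` into the outer two factors of `B ⊗ B ⊗ B`. -/
def leg₁₃ : B ⊗[R] B →ₐ[R] (B ⊗[R] B) ⊗[R] B :=
  Algebra.TensorProduct.map Algebra.TensorProduct.includeLeft (AlgHom.id R B)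

/-- The embedding `w ↦ w₂₃` of `B ⊗ B` into the last two factors of `B ⊗ B ⊗ B`. -/
def leg₂₃ : B ⊗[R] B →ₐ[R] (B ⊗[R] B) ⊗[R] B :=
  (Algebra.TensorProduct.assoc R R R B B B).symm.toAlgHom.comp
    Algebra.TensorProduct.includeRight

/-- The algebra endomorphism of `B ⊗ B ⊗ B` exchanging the first two factors. -/
def swap₁₂ : (B ⊗[R] B) ⊗[R] B →ₐ[R] (B ⊗[R] B) ⊗[R] B :=
  Algebra.TensorProduct.map (Algebra.TensorProduct.comm R B B).toAlgHom (AlgHom.id R B)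

/-- The algebra endomorphism of `B ⊗ B ⊗ B` exchanging the last two factors. -/
def swap₂₃ : (B ⊗[R] B) ⊗[R] B →ₐ[R] (B ⊗[R] B) ⊗[R] B :=
  (Algebra.TensorProduct.assoc R R R B B B).symm.toAlgHom.comp <|
    (Algebra.TensorProduct.map (AlgHom.id R B)
      (Algebra.TensorProduct.comm R B B).toAlgHom).comp
    (Algebra.TensorProduct.assoc R R R B B B).toAlgHom

lemma swap₁₂_leg₁₃ (w : B ⊗[R] B) : swap₁₂ (leg₁₃ w) = leg₂₃ w :=
  have h : (swap₁₂ (R := R) (B := B)).comp leg₁₃ = leg₂₃ := by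
    ext <;> simp [swap₁₂, leg₁₃, leg₂₃]
  DFunLike.congr_fun h w

lemma swap₁₂_leg₂₃ (w : B ⊗[R] B) : swap₁₂ (leg₂₃ w) = leg₁₃ w :=
  have h : (swap₁₂ (R := R) (B := B)).comp leg₂₃ = leg₁₃ := by
    ext <;> simp [swap₁₂, leg₂₃, leg₁₃, Algebra.TensorProduct.one_def]
  DFunLike.congr_fun h w

lemma swap₂₃_leg₁₂ (w : B ⊗[R] B) : swap₂₃ (leg₁₂ w) = leg₁₃ w :=
  have h : (swap₂₃ (R := R) (B := B)).comp leg₁₂ = leg₁₃ := by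
    ext <;> simp [swap₂₃, leg₁₂, leg₁₃, Algebra.TensorProduct.one_def]
  DFunLike.congr_fun h w

lemma swap₂₃_leg₁₃ (w : B ⊗[R] B) : swap₂₃ (leg₁₃ w) = leg₁₂ w :=
  have h : (swap₂₃ (R := R) (B := B)).comp leg₁₃ = leg₁₂ := by
    ext <;> simp [swap₂₃, leg₁₃, leg₁₂]
  DFunLike.congr_fun h w

lemma swap₁₂_swap₂₃_swap₁₂ (W : (B ⊗[R] B) ⊗[R] B) :
    swap₁₂ (swap₂₃ (swap₁₂ W)) = swap₂₃ (swap₁₂ (swap₂₃ W)) :=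
  have h : (swap₁₂ (R := R) (B := B)).comp (swap₂₃.comp swap₁₂) =
      (swap₂₃ (R := R) (B := B)).comp (swap₁₂.comp swap₂₃) := by
    ext <;> simp [swap₁₂, swap₂₃, Algebra.TensorProduct.one_def]
  DFunLike.congr_fun h W

/-- The flip of `B ⊗ B` followed by left multiplication by `e`, i.e. `x ⊗ y ↦ e (y ⊗ x)`: the
braid operator attached to `e` regarded as an `R`-matrix. -/
def mulFlip (e : B ⊗[R] B) : B ⊗[R] B →ₗ[R] B ⊗[R] B :=
  LinearMap.mulLeft R e ∘ₗ (TensorProduct.comm R B B).toLinearMap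

lemma mulFlip_apply (e w : B ⊗[R] B) :
    mulFlip e w = e * Algebra.TensorProduct.comm R B B w := rfl

lemma rTensor_mulFlip_apply (e : B ⊗[R] B) (W : (B ⊗[R] B) ⊗[R] B) :
    (mulFlip e).rTensor B W = leg₁₂ e * swap₁₂ W := by
  induction W with
  | zero => simp only [map_zero, mul_zero]
  | add V W hV hW => simp only [map_add, mul_add, hV, hW]
  | tmul w z => simp [mulFlip_apply, leg₁₂, swap₁₂]

lemma lTensor_mulFlip_apply (e : B ⊗[R] B) (V : B ⊗[R] (B ⊗[R] B)) :
    (mulFlip e).lTensor B V =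
      (1 ⊗ₜ[R] e) * Algebra.TensorProduct.map (AlgHom.id R B)
        (Algebra.TensorProduct.comm R B B).toAlgHom V := by
  induction V with
  | zero => simp only [map_zero, mul_zero]
  | add V W hV hW => simp only [map_add, mul_add, hV, hW]
  | tmul x w => simp [mulFlip_apply]

lemma assoc_symm_lTensor_mulFlip_assoc_apply (e : B ⊗[R] B) (W : (B ⊗[R] B) ⊗[R] B) :
    (TensorProduct.assoc R B B B).symm
      ((mulFlip e).lTensor B (TensorProduct.assoc R B B B W)) = leg₂₃ e * swap₂₃ W := by
  rw [lTensor_mulFlip_apply]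
  exact map_mul (Algebra.TensorProduct.assoc R R R B B B).symm _ _

theorem isYangBaxter_mulFlip_iff (e : B ⊗[R] B) :
    IsYangBaxter (mulFlip e) ↔
      leg₁₂ e * leg₁₃ e * leg₂₃ e = leg₂₃ e * leg₁₃ e * leg₁₂ e := by
  simp only [IsYangBaxter, LinearMap.ext_iff, LinearMap.comp_apply, LinearEquiv.coe_coe,
    rTensor_mulFlip_apply, assoc_symm_lTensor_mulFlip_assoc_apply, map_mul, swap₁₂_leg₁₃,
    swap₁₂_leg₂₃, swap₂₃_leg₁₂, swap₂₃_leg₁₃, swap₁₂_swap₂₃_swap₁₂, ← mul_assoc]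
  exact ⟨fun h ↦ by simpa only [map_one, mul_one] using h 1, fun h W ↦ by rw [h]⟩

lemma semiconjBy_leg₁₂ {e : B ⊗[R] B}
    (he : ∀ w, SemiconjBy e w (Algebra.TensorProduct.comm R B B w)) (W : (B ⊗[R] B) ⊗[R] B) :
    SemiconjBy (leg₁₂ e) W (swap₁₂ W) := by
  induction W with
  | zero => simp only [map_zero, SemiconjBy.zero_right]
  | add V W hV hW => simpa only [map_add] using hV.add_right hW
  | tmul w z => simpa [SemiconjBy, leg₁₂, swap₁₂] using congrArg (· ⊗ₜ[R] z) (he w)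

theorem isYangBaxter_mulFlip_of_semiconjBy {e : B ⊗[R] B}
    (he : ∀ w, SemiconjBy e w (Algebra.TensorProduct.comm R B B w)) : IsYangBaxter (mulFlip e) := by
  rw [isYangBaxter_mulFlip_iff]
  calc leg₁₂ e * leg₁₃ e * leg₂₃ e
      = leg₁₂ e * (leg₁₃ e * leg₂₃ e) := mul_assoc _ _ _
    _ = swap₁₂ (leg₁₃ e * leg₂₃ e) * leg₁₂ e := semiconjBy_leg₁₂ he _
    _ = leg₂₃ e * leg₁₃ e * leg₁₂ e := by rw [map_mul, swap₁₂_leg₁₃, swap₁₂_leg₂₃]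

lemma rTensor_mul'_assoc_symm_tmul (x : B) (w : B ⊗[R] B) :
    (LinearMap.mul' R B).rTensor B ((TensorProduct.assoc R B B B).symm (x ⊗ₜ[R] w)) =
      (x ⊗ₜ[R] 1) * w := by
  induction w with
  | zero => simp only [tmul_zero, map_zero, mul_zero]
  | add v w hv hw => simp only [tmul_add, map_add, mul_add, hv, hw]
  | tmul a b => simp

lemma lTensor_mul'_assoc_tmul (w : B ⊗[R] B) (y : B) :
    (LinearMap.mul' R B).lTensor B (TensorProduct.assoc R B B B (w ⊗ₜ[R] y)) =
      w * (1 ⊗ₜ[R] y) := by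
  induction w with
  | zero => simp only [zero_tmul, map_zero, zero_mul]
  | add v w hv hw => simp only [add_tmul, map_add, add_mul, hv, hw]
  | tmul a b => simp

lemma rTensor_mul'_assoc_symm_lTensor_comm_assoc_tmul (w : B ⊗[R] B) (y : B) :
    (LinearMap.mul' R B).rTensor B ((TensorProduct.assoc R B B B).symm
      ((TensorProduct.comm R B B).toLinearMap.lTensor B
        (TensorProduct.assoc R B B B (w ⊗ₜ[R] y)))) = w * (y ⊗ₜ[R] 1) := by
  induction w with
  | zero => simp only [zero_tmul, map_zero, zero_mul]
  | add v w hv hw => simp only [add_tmul, map_add, add_mul, hv, hw]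
  | tmul a b => simp

lemma comul_eq_tmul_one_mul {Δ : B →ₗ[R] B ⊗[R] B}
    (hl : Δ ∘ₗ LinearMap.mul' R B = (LinearMap.mul' R B).rTensor B ∘ₗ
      (TensorProduct.assoc R B B B).symm.toLinearMap ∘ₗ Δ.lTensor B) (x : B) :
    Δ x = (x ⊗ₜ[R] 1) * Δ 1 := by
  simpa [rTensor_mul'_assoc_symm_tmul] using LinearMap.congr_fun hl (x ⊗ₜ[R] 1)

lemma comul_eq_mul_one_tmul {Δ : B →ₗ[R] B ⊗[R] B}
    (hr : Δ ∘ₗ LinearMap.mul' R B = (LinearMap.mul' R B).lTensor B ∘ₗ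
      (TensorProduct.assoc R B B B).toLinearMap ∘ₗ Δ.rTensor B) (x : B) :
    Δ x = Δ 1 * (1 ⊗ₜ[R] x) := by
  simpa [lTensor_mul'_assoc_tmul] using LinearMap.congr_fun hr (1 ⊗ₜ[R] x)

lemma mul_comm_comul_eq_mulFlip {Δ : B →ₗ[R] B ⊗[R] B} {e : B ⊗[R] B}
    (hΔ : ∀ x, Δ x = e * (1 ⊗ₜ[R] x)) :
    (LinearMap.mul' R B).rTensor B ∘ₗ (TensorProduct.assoc R B B B).symm.toLinearMap ∘ₗ
      (TensorProduct.comm R B B).toLinearMap.lTensor B ∘ₗ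
      (TensorProduct.assoc R B B B).toLinearMap ∘ₗ Δ.rTensor B = mulFlip e := by
  refine TensorProduct.ext' fun x y ↦ ?_
  simp only [LinearMap.comp_apply, LinearEquiv.coe_coe, LinearMap.rTensor_tmul]
  rw [rTensor_mul'_assoc_symm_lTensor_comm_assoc_tmul]
  calc Δ x * (y ⊗ₜ[R] 1)
      = e * (1 ⊗ₜ[R] x) * (y ⊗ₜ[R] 1) := by rw [hΔ]
    _ = e * (y ⊗ₜ[R] x) := by simp [mul_assoc]
    _ = mulFlip e (x ⊗ₜ[R] y) := by rw [mulFlip_apply, Algebra.TensorProduct.comm_tmul]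

lemma semiconjBy_comm_of_comm_eq {e : B ⊗[R] B}
    (he : ∀ x : B, (x ⊗ₜ[R] 1) * e = e * (1 ⊗ₜ[R] x))
    (hτ : Algebra.TensorProduct.comm R B B e = e) (w : B ⊗[R] B) :
    SemiconjBy e w (Algebra.TensorProduct.comm R B B w) := by
  have he' (x : B) : e * (x ⊗ₜ[R] 1) = (1 ⊗ₜ[R] x) * e := by
    simpa [hτ] using (congrArg (Algebra.TensorProduct.comm R B B) (he x)).symm
  induction w with
  | zero => simp only [map_zero, SemiconjBy.zero_right]
  | add v w hv hw => simpa only [map_add] using hv.add_right hw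
  | tmul x y =>
    calc e * (x ⊗ₜ[R] y)
        = e * (x ⊗ₜ[R] 1) * (1 ⊗ₜ[R] y) := by simp [mul_assoc]
      _ = (1 ⊗ₜ[R] x) * ((y ⊗ₜ[R] 1) * e) := by rw [he', he, mul_assoc]
      _ = (y ⊗ₜ[R] x) * e := by simp [← mul_assoc]

theorem ybe_mu_tau_comul_general {Δ : B →ₗ[R] B ⊗[R] B}
    (hl : Δ ∘ₗ LinearMap.mul' R B = (LinearMap.mul' R B).rTensor B ∘ₗ
      (TensorProduct.assoc R B B B).symm.toLinearMap ∘ₗ Δ.lTensor B)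
    (hr : Δ ∘ₗ LinearMap.mul' R B = (LinearMap.mul' R B).lTensor B ∘ₗ
      (TensorProduct.assoc R B B B).toLinearMap ∘ₗ Δ.rTensor B)
    (hτ : TensorProduct.comm R B B (Δ 1) = Δ 1) :
    IsYangBaxter ((LinearMap.mul' R B).rTensor B ∘ₗ
      (TensorProduct.assoc R B B B).symm.toLinearMap ∘ₗ
      (TensorProduct.comm R B B).toLinearMap.lTensor B ∘ₗ
      (TensorProduct.assoc R B B B).toLinearMap ∘ₗ Δ.rTensor B) := by
  have casimir (x : B) : (x ⊗ₜ[R] 1) * Δ 1 = Δ 1 * (1 ⊗ₜ[R] x) := by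
    rw [← comul_eq_tmul_one_mul hl, comul_eq_mul_one_tmul hr]
  rw [mul_comm_comul_eq_mulFlip (comul_eq_mul_one_tmul hr)]
  exact isYangBaxter_mulFlip_of_semiconjBy (semiconjBy_comm_of_comm_eq casimir hτ)

end Algebra

/-- For a symmetric Frobenius structure `(Δ, ε)` on an associative unital
`k`-algebra `A`, the map `R₂ = (μ⊗id)∘(id⊗τ)∘(Δ⊗id)` satisfies the Yang–Baxter equation. -/
theorem ybe_mu_tau_comul (Δ : A →ₗ[k] A ⊗[k] A) (ε : A →ₗ[k] k)
    (hΔ : IsFrobenius k A Δ) (hε : IsCounit k A Δ ε) (hsym : IsSymmetric k A Δ ε) :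
    YBE k A ((mu k A).rTensor A ∘ₗ (asso k A).symm.toLinearMap ∘ₗ
      (tau k A).lTensor A ∘ₗ (asso k A).toLinearMap ∘ₗ Δ.rTensor A) :=
  ybe_mu_tau_comul_general hΔ.2.1 hΔ.2.2 hsym.2
end
end

section
/- For the Frobenius algebra A = k[x]/(x²) over a field k, the space of Frobenius 1-cocycles Z¹_f(A;A) = {h : d^{1,1}(h)=0 and d^{1,2}(h)=0} has dimension 0 over k if char(k) ≠ 2, and dimension 1 over k if char(k) = 2 (in that case it is spanned by the k-linear map h with h(1) = 0 and h(x) = 1). In particular H¹_f(A;A) = 0 if char(k) ≠ 2 and H¹_f(A;A) ≅ k if char(k) = 2. -/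
open TensorProduct

noncomputable section

variable (k A : Type*) [Field k] [Ring A] [Algebra k A]

/-- `d^{1,1}(h) = μ∘(h⊗id) + μ∘(id⊗h) − h∘μ`. -/
def d11 (h : A →ₗ[k] A) : A ⊗[k] A →ₗ[k] A :=
  mu k A ∘ₗ h.rTensor A + mu k A ∘ₗ h.lTensor A - h ∘ₗ mu k A

/-- `d^{1,2}(h) = (h⊗id)∘Δ + (id⊗h)∘Δ − Δ∘h`. -/
def d12 (Δ : A →ₗ[k] A ⊗[k] A) (h : A →ₗ[k] A) : A →ₗ[k] A ⊗[k] A :=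
  h.rTensor A ∘ₗ Δ + h.lTensor A ∘ₗ Δ - Δ ∘ₗ h

/-- `d^{2,1}(φ₁) = μ∘(φ₁⊗id) + φ₁∘(μ⊗id) − μ∘(id⊗φ₁) − φ₁∘(id⊗μ)`. -/
def d21 (φ₁ : A ⊗[k] A →ₗ[k] A) : ((A ⊗[k] A) ⊗[k] A) →ₗ[k] A :=
  mu k A ∘ₗ φ₁.rTensor A + φ₁ ∘ₗ (mu k A).rTensor A
  - mu k A ∘ₗ φ₁.lTensor A ∘ₗ (asso k A).toLinearMap
  - φ₁ ∘ₗ (mu k A).lTensor A ∘ₗ (asso k A).toLinearMap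

/-- `d^{2,2}_{(1)}(φ₁,φ₂) = Δ∘φ₁ + φ₂∘μ − (φ₁⊗id)∘(id⊗Δ) − (μ⊗id)∘(id⊗φ₂)`. -/
def d221 (Δ : A →ₗ[k] A ⊗[k] A) (φ₁ : A ⊗[k] A →ₗ[k] A) (φ₂ : A →ₗ[k] A ⊗[k] A) :
    A ⊗[k] A →ₗ[k] A ⊗[k] A :=
  Δ ∘ₗ φ₁ + φ₂ ∘ₗ mu k A
  - φ₁.rTensor A ∘ₗ (asso k A).symm.toLinearMap ∘ₗ Δ.lTensor A
  - (mu k A).rTensor A ∘ₗ (asso k A).symm.toLinearMap ∘ₗ φ₂.lTensor A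

/-- `d^{2,2}_{(2)}(φ₁,φ₂) = Δ∘φ₁ + φ₂∘μ − (id⊗φ₁)∘(Δ⊗id) − (id⊗μ)∘(φ₂⊗id)`. -/
def d222 (Δ : A →ₗ[k] A ⊗[k] A) (φ₁ : A ⊗[k] A →ₗ[k] A) (φ₂ : A →ₗ[k] A ⊗[k] A) :
    A ⊗[k] A →ₗ[k] A ⊗[k] A :=
  Δ ∘ₗ φ₁ + φ₂ ∘ₗ mu k A
  - φ₁.lTensor A ∘ₗ (asso k A).toLinearMap ∘ₗ Δ.rTensor A
  - (mu k A).lTensor A ∘ₗ (asso k A).toLinearMap ∘ₗ φ₂.rTensor A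

/-- `d^{2,3}(φ₂) = (φ₂⊗id)∘Δ + (Δ⊗id)∘φ₂ − (id⊗φ₂)∘Δ − (id⊗Δ)∘φ₂`. -/
def d23 (Δ : A →ₗ[k] A ⊗[k] A) (φ₂ : A →ₗ[k] A ⊗[k] A) :
    A →ₗ[k] (A ⊗[k] A) ⊗[k] A :=
  φ₂.rTensor A ∘ₗ Δ + Δ.rTensor A ∘ₗ φ₂
  - (asso k A).symm.toLinearMap ∘ₗ φ₂.lTensor A ∘ₗ Δ
  - (asso k A).symm.toLinearMap ∘ₗ Δ.lTensor A ∘ₗ φ₂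

/-!
A 1-cocycle is both a derivation and a coderivation. A derivation kills the unit and, dually, a
coderivation takes values in the kernel of the counit. For `K[ε]` the counit is the `ε`-coordinate,
so a cocycle has `h 1 = 0` and `h ε = c • 1` for a scalar `c`, and the Leibniz rule at `ε * ε = 0`
reads `2 * c = 0`.
-/

section FrobeniusCocycles

variable {k A}

theorem d11_tmul (h : A →ₗ[k] A) (a b : A) :
    d11 k A h (a ⊗ₜ b) = h a * b + a * h b - h (a * b) :=
  rfl

theorem d11_eq_zero_iff {h : A →ₗ[k] A} :
    d11 k A h = 0 ↔ ∀ a b, h (a * b) = h a * b + a * h b := by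
  constructor
  · intro hh a b
    rw [eq_comm, ← sub_eq_zero, ← d11_tmul, hh, LinearMap.zero_apply]
  · intro leibniz
    ext a b
    simp [d11_tmul, leibniz]

theorem map_one_eq_zero_of_d11_eq_zero {h : A →ₗ[k] A} (hh : d11 k A h = 0) : h 1 = 0 := by
  simpa using d11_eq_zero_iff.mp hh 1 1

theorem counit_comp_eq_zero_of_d12_eq_zero {Δ : A →ₗ[k] A ⊗[k] A} {counit : A →ₗ[k] k}
    (rTensor_counit : counit.rTensor A ∘ₗ Δ = TensorProduct.mk k k A 1)
    (lTensor_counit : counit.lTensor A ∘ₗ Δ = (TensorProduct.mk k A k).flip 1)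
    {h : A →ₗ[k] A} (hh : d12 k A Δ h = 0) : counit ∘ₗ h = 0 := by
  have counit_left (a : A) : counit.rTensor A (Δ a) = 1 ⊗ₜ a :=
    LinearMap.congr_fun rTensor_counit a
  have counit_right (a : A) : counit.lTensor A (Δ a) = a ⊗ₜ 1 :=
    LinearMap.congr_fun lTensor_counit a
  ext a
  have apply_left : map counit counit (h.rTensor A (Δ a)) = counit (h a) ⊗ₜ 1 := by
    rw [← LinearMap.comp_apply, LinearMap.map_comp_rTensor, ← LinearMap.rTensor_comp_lTensor,
      LinearMap.comp_apply, counit_right, LinearMap.rTensor_tmul, LinearMap.comp_apply]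
  have apply_right : map counit counit (h.lTensor A (Δ a)) = 1 ⊗ₜ counit (h a) := by
    rw [← LinearMap.comp_apply, LinearMap.map_comp_lTensor, ← LinearMap.lTensor_comp_rTensor,
      LinearMap.comp_apply, counit_left, LinearMap.lTensor_tmul, LinearMap.comp_apply]
  have apply_comul : map counit counit (Δ (h a)) = 1 ⊗ₜ counit (h a) := by
    rw [← LinearMap.lTensor_comp_rTensor, LinearMap.comp_apply, counit_left,
      LinearMap.lTensor_tmul]
  have eq_zero := congrArg (map counit counit) (LinearMap.congr_fun hh a)
  simpa [d12, apply_left, apply_right, apply_comul] using congrArg (TensorProduct.lid k k) eq_zero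

end FrobeniusCocycles

section DualNumber

open DualNumber

theorem dualNumber_linearMap_ext {R M : Type*} [Semiring R] [AddCommMonoid M] [Module R M]
    {f g : R[ε] →ₗ[R] M} (h_one : f 1 = g 1) (h_eps : f ε = g ε) : f = g := by
  refine TrivSqZeroExt.linearMap_ext (fun r => ?_) (fun r => ?_)
  · have : (TrivSqZeroExt.inl r : R[ε]) = r • 1 := by ext <;> simp
    rw [this, map_smul, map_smul, h_one]
  · rw [inr_eq_smul_eps, map_smul, map_smul, h_eps]

variable {K : Type*} [Field K]

theorem dualNumber_d11_eq_zero_iff {h : K[ε] →ₗ[K] K[ε]} :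
    d11 K K[ε] h = 0 ↔ h 1 = 0 ∧ 2 * (h ε).fst = 0 := by
  have leibniz_eps : h ε * ε + ε * h ε = 0 ↔ 2 * (h ε).fst = 0 := by
    simp [TrivSqZeroExt.ext_iff, two_mul]
  constructor
  · intro hh
    refine ⟨map_one_eq_zero_of_d11_eq_zero hh, leibniz_eps.mp ?_⟩
    rw [← d11_eq_zero_iff.mp hh, eps_mul_eps, map_zero]
  · rintro ⟨h_one, h_eps⟩
    refine TensorProduct.ext (dualNumber_linearMap_ext (dualNumber_linearMap_ext ?_ ?_)
      (dualNumber_linearMap_ext ?_ ?_)) <;>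
    simp [d11_tmul, h_one, leibniz_eps.mpr h_eps]

variable {Δ : K[ε] →ₗ[K] K[ε] ⊗[K] K[ε]} (hΔ_one : Δ 1 = 1 ⊗ₜ[K] ε + ε ⊗ₜ[K] 1)
  (hΔ_eps : Δ ε = ε ⊗ₜ[K] ε)
include hΔ_one hΔ_eps

theorem dualNumber_snd_apply_eq_zero_of_d12_eq_zero {h : K[ε] →ₗ[K] K[ε]}
    (hh : d12 K K[ε] Δ h = 0) (a : K[ε]) : (h a).snd = 0 := by
  refine LinearMap.congr_fun (counit_comp_eq_zero_of_d12_eq_zero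
    (counit := TrivSqZeroExt.sndHom K K) ?_ ?_ hh) a <;>
  apply dualNumber_linearMap_ext <;> simp [hΔ_one, hΔ_eps]

theorem dualNumber_d12_eq_zero_of_eps_eq_smul_one {h : K[ε] →ₗ[K] K[ε]} {c : K} (h_one : h 1 = 0)
    (h_eps : h ε = c • 1) (hc : 2 * c = 0) : d12 K K[ε] Δ h = 0 := by
  apply dualNumber_linearMap_ext
  · calc d12 K K[ε] Δ h 1 = (2 * c) • (1 : K[ε]) ⊗ₜ[K] (1 : K[ε]) := by
          simp [d12, hΔ_one, h_one, h_eps, TensorProduct.smul_tmul', two_mul, add_smul]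
      _ = 0 := by rw [hc, zero_smul]
  · simp [d12, hΔ_one, hΔ_eps, h_eps, TensorProduct.smul_tmul']

theorem dualNumber_cocycle_iff {h : K[ε] →ₗ[K] K[ε]} :
    d11 K K[ε] h = 0 ∧ d12 K K[ε] Δ h = 0 ↔
      h 1 = 0 ∧ ∃ c : K, 2 * c = 0 ∧ h ε = c • 1 := by
  constructor
  · rintro ⟨h_der, h_coder⟩
    obtain ⟨h_one, two_mul_fst⟩ := dualNumber_d11_eq_zero_iff.mp h_der
    have snd_h_eps := dualNumber_snd_apply_eq_zero_of_d12_eq_zero hΔ_one hΔ_eps h_coder ε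
    exact ⟨h_one, (h ε).fst, two_mul_fst, by ext <;> simp [snd_h_eps]⟩
  · rintro ⟨h_one, c, hc, h_eps⟩
    exact ⟨dualNumber_d11_eq_zero_iff.mpr ⟨h_one, by simpa [h_eps] using hc⟩,
      dualNumber_d12_eq_zero_of_eps_eq_smul_one hΔ_one hΔ_eps h_one h_eps hc⟩

end DualNumber

/-- for the Frobenius algebra `A = k[x]/(x²)` (the dual numbers, with
`Δ(1) = 1⊗x + x⊗1`, `Δ(x) = x⊗x` where `x = ε`), the space of Frobenius 1-cocycles
is `0` if `char k ≠ 2`, and is 1-dimensional, spanned by the map `h₀` with `h₀(1) = 0`,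
`h₀(x) = 1`, if `char k = 2` (hence `H¹_f = 0` resp. `H¹_f ≅ k`). -/
theorem dualNumber_Z1 (K : Type*) [Field K]
    (Δ : DualNumber K →ₗ[K] DualNumber K ⊗[K] DualNumber K)
    (hΔ1 : Δ 1 = (1 : DualNumber K) ⊗ₜ[K] (DualNumber.eps : DualNumber K) +
      (DualNumber.eps : DualNumber K) ⊗ₜ[K] (1 : DualNumber K))
    (hΔx : Δ DualNumber.eps =
      (DualNumber.eps : DualNumber K) ⊗ₜ[K] (DualNumber.eps : DualNumber K)) :
    (ringChar K ≠ 2 →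
      ∀ h : DualNumber K →ₗ[K] DualNumber K,
        d11 K (DualNumber K) h = 0 → d12 K (DualNumber K) Δ h = 0 → h = 0) ∧
    (ringChar K = 2 →
      ∀ h₀ : DualNumber K →ₗ[K] DualNumber K, h₀ 1 = 0 → h₀ DualNumber.eps = 1 →
        ∀ h : DualNumber K →ₗ[K] DualNumber K,
          (d11 K (DualNumber K) h = 0 ∧ d12 K (DualNumber K) Δ h = 0) ↔
          h ∈ Submodule.span K {h₀}) := by
  constructor
  · intro hchar h h_der h_coder
    obtain ⟨h_one, c, hc, h_eps⟩ := (dualNumber_cocycle_iff hΔ1 hΔx).mp ⟨h_der, h_coder⟩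
    have c_eq_zero : c = 0 := (mul_eq_zero.mp hc).resolve_left (Ring.two_ne_zero hchar)
    exact dualNumber_linearMap_ext h_one (by simp [h_eps, c_eq_zero])
  · intro hchar h₀ h₀_one h₀_eps h
    have : CharP K 2 := ringChar.of_eq hchar
    rw [dualNumber_cocycle_iff hΔ1 hΔx, Submodule.mem_span_singleton]
    constructor
    · rintro ⟨h_one, c, -, h_eps⟩
      exact ⟨c, dualNumber_linearMap_ext (by simp [h₀_one, h_one]) (by simp [h₀_eps, h_eps])⟩
    · rintro ⟨c, rfl⟩
      exact ⟨by simp [h₀_one], c, by simp [CharTwo.two_eq_zero], by simp [h₀_eps]⟩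
end
end

section
/- For the Frobenius algebra A = k[x]/(x²) over a field k, the space Z²_f(A;A) of Frobenius 2-cocycles — the k-subspace of Hom_k(A⊗A, A) × Hom_k(A, A⊗A) consisting of pairs (φ₁,φ₂) with d^{2,1}(φ₁) = 0, d^{2,2}_{(1)}(φ₁,φ₂) = 0 and d^{2,3}(φ₂) = 0 — has dimension 6 over k. -/
open TensorProduct

noncomputable section

variable (k A : Type*) [Field k] [Ring A] [Algebra k A]

/-!
Write `A = K[ε]`. Evaluating on the basis, `d21 φ₁ = 0` forces `φ₁` to be
`a ⊗ b ↦ u a b + snd a snd b v`, and dually `d23 φ₂ = 0` forces `φ₂` to be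
`a ↦ Δ (a w) + (s snd a + t fst a) (1 ⊗ 1)`. The condition `d221` holds for the summands `u a b` and
`Δ (a w)` because `Δ` is `A`-linear, so it only constrains `v`, `s` and `t`, to `s = fst v` and
`t = -snd v`. Hence `Z²_f(A;A)` is parametrised by `(u, v, w) ∈ A³`.
-/

theorem exists_linearIndependent_span_range_eq {F V : Type*} [DivisionRing F] [AddCommGroup V]
    [Module F V] {S : Submodule F V} {n : ℕ} [NeZero n] (hS : Module.finrank F S = n) :
    ∃ f : Fin n → V, LinearIndependent F f ∧ Submodule.span F (Set.range f) = S := by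
  have := Module.finite_of_finrank_pos (hS ▸ NeZero.pos n)
  let b := Module.finBasisOfFinrankEq F S hS
  refine ⟨fun i ↦ b i, b.linearIndependent.map' S.subtype S.ker_subtype, ?_⟩
  have h := congrArg (Submodule.map S.subtype) b.span_eq
  rwa [Submodule.map_span, ← Set.range_comp, Submodule.map_subtype_top] at h

section GeneralAlgebra

variable {k A}

theorem d21_add (φ ψ : A ⊗[k] A →ₗ[k] A) : d21 k A (φ + ψ) = d21 k A φ + d21 k A ψ := by
  simp only [d21, LinearMap.rTensor_add, LinearMap.lTensor_add, LinearMap.comp_add,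
    LinearMap.add_comp]
  abel

theorem d21_smul (c : k) (φ : A ⊗[k] A →ₗ[k] A) : d21 k A (c • φ) = c • d21 k A φ := by
  simp only [d21, LinearMap.rTensor_smul, LinearMap.lTensor_smul, LinearMap.comp_smul,
    LinearMap.smul_comp, smul_add, smul_sub]

theorem d221_add (Δ : A →ₗ[k] A ⊗[k] A) (φ₁ ψ₁ : A ⊗[k] A →ₗ[k] A) (φ₂ ψ₂ : A →ₗ[k] A ⊗[k] A) :
    d221 k A Δ (φ₁ + ψ₁) (φ₂ + ψ₂) = d221 k A Δ φ₁ φ₂ + d221 k A Δ ψ₁ ψ₂ := by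
  simp only [d221, LinearMap.rTensor_add, LinearMap.lTensor_add, LinearMap.comp_add,
    LinearMap.add_comp]
  abel

theorem d221_smul (Δ : A →ₗ[k] A ⊗[k] A) (c : k) (φ₁ : A ⊗[k] A →ₗ[k] A)
    (φ₂ : A →ₗ[k] A ⊗[k] A) : d221 k A Δ (c • φ₁) (c • φ₂) = c • d221 k A Δ φ₁ φ₂ := by
  simp only [d221, LinearMap.rTensor_smul, LinearMap.lTensor_smul, LinearMap.comp_smul,
    LinearMap.smul_comp, smul_add, smul_sub]

theorem d23_add (Δ φ ψ : A →ₗ[k] A ⊗[k] A) :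
    d23 k A Δ (φ + ψ) = d23 k A Δ φ + d23 k A Δ ψ := by
  simp only [d23, LinearMap.rTensor_add, LinearMap.lTensor_add, LinearMap.comp_add,
    LinearMap.add_comp]
  abel

theorem d23_smul (Δ : A →ₗ[k] A ⊗[k] A) (c : k) (φ : A →ₗ[k] A ⊗[k] A) :
    d23 k A Δ (c • φ) = c • d23 k A Δ φ := by
  simp only [d23, LinearMap.rTensor_smul, LinearMap.lTensor_smul, LinearMap.comp_smul,
    LinearMap.smul_comp]
  module

theorem d21_tmul (φ : A ⊗[k] A →ₗ[k] A) (a b c : A) :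
    d21 k A φ ((a ⊗ₜ b) ⊗ₜ c) =
      φ (a ⊗ₜ b) * c + φ ((a * b) ⊗ₜ c) - a * φ (b ⊗ₜ c) - φ (a ⊗ₜ (b * c)) :=
  rfl

theorem d221_tmul (Δ : A →ₗ[k] A ⊗[k] A) (φ₁ : A ⊗[k] A →ₗ[k] A) (φ₂ : A →ₗ[k] A ⊗[k] A)
    (a b : A) :
    d221 k A Δ φ₁ φ₂ (a ⊗ₜ b) =
      Δ (φ₁ (a ⊗ₜ b)) + φ₂ (a * b) -
        φ₁.rTensor A ((TensorProduct.assoc k A A A).symm (a ⊗ₜ Δ b)) -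
        (LinearMap.mul' k A).rTensor A ((TensorProduct.assoc k A A A).symm (a ⊗ₜ φ₂ b)) :=
  rfl

theorem d23_apply (Δ φ : A →ₗ[k] A ⊗[k] A) (a : A) :
    d23 k A Δ φ a =
      φ.rTensor A (Δ a) + Δ.rTensor A (φ a) -
        (TensorProduct.assoc k A A A).symm (φ.lTensor A (Δ a)) -
        (TensorProduct.assoc k A A A).symm (Δ.lTensor A (φ a)) :=
  rfl

variable (k A) in
/-- The space `Z²_f(A;A)` of Frobenius 2-cocycles of `A` with comultiplication `Δ`. -/
def frobeniusTwoCocycles (Δ : A →ₗ[k] A ⊗[k] A) :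
    Submodule k ((A ⊗[k] A →ₗ[k] A) × (A →ₗ[k] A ⊗[k] A)) where
  carrier := {p | d21 k A p.1 = 0 ∧ d221 k A Δ p.1 p.2 = 0 ∧ d23 k A Δ p.2 = 0}
  zero_mem' := ⟨by simp [d21], by simp [d221], by simpa using d23_smul Δ 0 0⟩
  add_mem' {p q} hp hq := by simp_all [d21_add, d221_add, d23_add]
  smul_mem' c p hp := by simp_all [d21_smul, d221_smul, d23_smul]

theorem mem_frobeniusTwoCocycles {Δ : A →ₗ[k] A ⊗[k] A}
    {p : (A ⊗[k] A →ₗ[k] A) × (A →ₗ[k] A ⊗[k] A)} :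
    p ∈ frobeniusTwoCocycles k A Δ ↔
      d21 k A p.1 = 0 ∧ d221 k A Δ p.1 p.2 = 0 ∧ d23 k A Δ p.2 = 0 :=
  Iff.rfl

theorem map_one_tmul_of_d21_eq_zero {φ : A ⊗[k] A →ₗ[k] A} (h : d21 k A φ = 0) (a : A) :
    φ (1 ⊗ₜ a) = φ (1 ⊗ₜ 1) * a := by
  have h' := d21_tmul φ 1 1 a
  rw [h, LinearMap.zero_apply, one_mul, one_mul, one_mul, add_sub_cancel_right] at h'
  exact (sub_eq_zero.mp h'.symm).symm

theorem map_tmul_one_of_d21_eq_zero {φ : A ⊗[k] A →ₗ[k] A} (h : d21 k A φ = 0) (a : A) :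
    φ (a ⊗ₜ 1) = a * φ (1 ⊗ₜ 1) := by
  have h' := d21_tmul φ a 1 1
  rw [h, LinearMap.zero_apply, mul_one, mul_one, mul_one, sub_right_comm,
    add_sub_cancel_right] at h'
  exact sub_eq_zero.mp h'.symm

theorem comp_mulLeft_of_comp_mu {Δ : A →ₗ[k] A ⊗[k] A}
    (hΔ : Δ ∘ₗ mu k A = (mu k A).rTensor A ∘ₗ (asso k A).symm.toLinearMap ∘ₗ Δ.lTensor A) (u : A) :
    Δ ∘ₗ LinearMap.mulLeft k u = (LinearMap.mulLeft k u).rTensor A ∘ₗ Δ := by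
  have hmul : (mu k A).rTensor A ∘ₗ (asso k A).symm.toLinearMap ∘ₗ
      TensorProduct.mk k A (A ⊗[k] A) u = (LinearMap.mulLeft k u).rTensor A :=
    TensorProduct.ext' fun a b ↦ by simp [mu, asso]
  ext a
  simpa [mu, ← hmul] using LinearMap.congr_fun hΔ (u ⊗ₜ a)

theorem d221_mulLeft_mulRight {Δ : A →ₗ[k] A ⊗[k] A}
    (hΔ : Δ ∘ₗ mu k A = (mu k A).rTensor A ∘ₗ (asso k A).symm.toLinearMap ∘ₗ Δ.lTensor A)
    (u w : A) :
    d221 k A Δ (LinearMap.mulLeft k u ∘ₗ mu k A) (Δ ∘ₗ LinearMap.mulRight k w) = 0 := by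
  have hu : (LinearMap.mulLeft k u ∘ₗ mu k A).rTensor A ∘ₗ (asso k A).symm.toLinearMap ∘ₗ
      Δ.lTensor A = Δ ∘ₗ LinearMap.mulLeft k u ∘ₗ mu k A := by
    rw [LinearMap.rTensor_comp, LinearMap.comp_assoc, ← hΔ, ← LinearMap.comp_assoc,
      ← comp_mulLeft_of_comp_mu hΔ, LinearMap.comp_assoc]
  have hw : (mu k A).rTensor A ∘ₗ (asso k A).symm.toLinearMap ∘ₗ
      (Δ ∘ₗ LinearMap.mulRight k w).lTensor A = (Δ ∘ₗ LinearMap.mulRight k w) ∘ₗ mu k A :=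
    calc
      _ = (Δ ∘ₗ mu k A) ∘ₗ (LinearMap.mulRight k w).lTensor A := by
        rw [hΔ, LinearMap.lTensor_comp]
        simp only [LinearMap.comp_assoc]
      _ = _ := TensorProduct.ext' fun a b ↦ by simp [mu, mul_assoc]
  rw [d221, hu, hw]
  abel

end GeneralAlgebra

section DualNumber

open DualNumber TrivSqZeroExt

section Basis

variable (R : Type*) [CommSemiring R]

/-- The basis `1, ε` of the dual numbers. -/
def dualNumberBasis : Module.Basis (Fin 2) R R[ε] :=
  .ofEquivFun
    { toFun := fun a ↦ ![a.fst, a.snd]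
      invFun := fun c ↦ inl (c 0) + inr (c 1)
      map_add' := fun _ _ ↦ by simp
      map_smul' := fun _ _ ↦ by simp
      left_inv := fun _ ↦ by ext <;> simp
      right_inv := fun c ↦ by ext i; fin_cases i <;> simp }

@[simp]
theorem dualNumberBasis_repr (a : R[ε]) (i : Fin 2) :
    (dualNumberBasis R).repr a i = ![a.fst, a.snd] i := rfl

@[simp]
theorem dualNumberBasis_zero : dualNumberBasis R 0 = 1 :=
  (dualNumberBasis R).ext_elem fun i ↦ by fin_cases i <;> simp

@[simp]
theorem dualNumberBasis_one : dualNumberBasis R 1 = ε :=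
  (dualNumberBasis R).ext_elem fun i ↦ by fin_cases i <;> simp

theorem finrank_dualNumber [StrongRankCondition R] : Module.finrank R R[ε] = 2 :=
  Module.finrank_eq_card_basis (dualNumberBasis R)

variable {R} {M : Type*} [AddCommMonoid M] [Module R M]

theorem dualNumber_linearMap_ext_s13 {f g : R[ε] →ₗ[R] M} (h1 : f 1 = g 1) (hε : f ε = g ε) :
    f = g :=
  (dualNumberBasis R).ext <| by simp [Fin.forall_fin_two, h1, hε]

theorem dualNumber_tensor_linearMap_ext {f g : R[ε] ⊗[R] R[ε] →ₗ[R] M}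
    (h11 : f (1 ⊗ₜ 1) = g (1 ⊗ₜ 1)) (h1ε : f (1 ⊗ₜ ε) = g (1 ⊗ₜ ε))
    (hε1 : f (ε ⊗ₜ 1) = g (ε ⊗ₜ 1)) (hεε : f (ε ⊗ₜ ε) = g (ε ⊗ₜ ε)) : f = g :=
  ((dualNumberBasis R).tensorProduct (dualNumberBasis R)).ext <| by
    simp [Prod.forall, Fin.forall_fin_two, h11, h1ε, hε1, hεε]

theorem exists_eq_smul_one_add_smul_eps (a : R[ε]) : ∃ x y : R, a = x • 1 + y • ε :=
  ⟨a.fst, a.snd, by ext <;> simp⟩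

theorem exists_eq_sum_smul_tmul (t : R[ε] ⊗[R] R[ε]) : ∃ a b c d : R,
    t = a • (1 ⊗ₜ 1) + b • (1 ⊗ₜ ε) + c • (ε ⊗ₜ 1) + d • (ε ⊗ₜ ε) := by
  have h := ((dualNumberBasis R).tensorProduct (dualNumberBasis R)).sum_repr t
  simp only [Fintype.sum_prod_type, Fin.sum_univ_two, Module.Basis.tensorProduct_apply,
    dualNumberBasis_zero, dualNumberBasis_one, ← add_assoc] at h
  exact ⟨_, _, _, _, h.symm⟩

variable (R) in
/-- The comultiplication of `R[ε]` induced by the Frobenius form `snd`. -/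
def dualNumberComul : R[ε] →ₗ[R] R[ε] ⊗[R] R[ε] :=
  (fstHom R R R).toLinearMap.smulRight (1 ⊗ₜ ε + ε ⊗ₜ 1) + (sndHom R R).smulRight (ε ⊗ₜ ε)

@[simp]
theorem dualNumberComul_one : dualNumberComul R 1 = 1 ⊗ₜ ε + ε ⊗ₜ 1 := by
  simp [dualNumberComul]

@[simp]
theorem dualNumberComul_eps : dualNumberComul R ε = ε ⊗ₜ ε := by
  simp [dualNumberComul]

theorem dualNumberComul_injective : Function.Injective (dualNumberComul R) := by
  have counit : (TensorProduct.lid R R[ε]).toLinearMap ∘ₗ (sndHom R R).rTensor R[ε] ∘ₗ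
      dualNumberComul R = LinearMap.id :=
    dualNumber_linearMap_ext_s13 (by simp) (by simp)
  exact Function.LeftInverse.injective
    (g := (TensorProduct.lid R R[ε]).toLinearMap ∘ₗ (sndHom R R).rTensor R[ε])
    (LinearMap.congr_fun counit)

end Basis

section Cocycles

variable {K : Type*} [Field K]

theorem dualNumberComul_comp_mu : dualNumberComul K ∘ₗ mu K K[ε] =
    (mu K K[ε]).rTensor K[ε] ∘ₗ (asso K K[ε]).symm.toLinearMap ∘ₗ
      (dualNumberComul K).lTensor K[ε] := by
  apply dualNumber_tensor_linearMap_ext <;> simp [mu, asso, tmul_add]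

/-- The Hochschild 2-cocycle of `K[ε]` with value `u` at `1 ⊗ 1` and value `v` at `ε ⊗ ε`. -/
def mulDeformation (u v : K[ε]) : K[ε] ⊗[K] K[ε] →ₗ[K] K[ε] :=
  LinearMap.mulLeft K u ∘ₗ mu K K[ε] +
    (LinearMap.mul' K K ∘ₗ TensorProduct.map (sndHom K K) (sndHom K K)).smulRight v

@[simp]
theorem mulDeformation_tmul (u v a b : K[ε]) :
    mulDeformation u v (a ⊗ₜ b) = u * (a * b) + (a.snd * b.snd) • v := by
  simp [mulDeformation, mu]

theorem d21_mulDeformation (u v : K[ε]) : d21 K K[ε] (mulDeformation u v) = 0 := by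
  refine TensorProduct.ext_threefold fun a b c ↦ ?_
  ext
  · simp only [d21_tmul, mulDeformation_tmul, TrivSqZeroExt.snd_mul, smul_eq_mul,
      MulOpposite.smul_eq_mul_unop, MulOpposite.unop_op, fst_sub, fst_add, fst_mul, fst_smul,
      LinearMap.zero_apply, fst_zero]
    ring
  · simp only [d21_tmul, mulDeformation_tmul, TrivSqZeroExt.snd_mul, smul_eq_mul,
      MulOpposite.smul_eq_mul_unop, MulOpposite.unop_op, snd_sub, snd_add, fst_add, fst_mul,
      fst_smul, MulOpposite.op_mul, MulOpposite.unop_mul, snd_smul, smul_add, MulOpposite.op_add,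
      MulOpposite.unop_add, LinearMap.zero_apply, snd_zero]
    ring

theorem eq_mulDeformation_of_d21_eq_zero {φ : K[ε] ⊗[K] K[ε] →ₗ[K] K[ε]}
    (h : d21 K K[ε] φ = 0) : φ = mulDeformation (φ (1 ⊗ₜ 1)) (φ (ε ⊗ₜ ε)) := by
  apply dualNumber_tensor_linearMap_ext <;>
    simp [map_one_tmul_of_d21_eq_zero h ε, map_tmul_one_of_d21_eq_zero h ε, mul_comm]

/-- The dual counterpart of `mulDeformation`: the general solution `φ` of `d23 φ = 0` over the dual
numbers. -/
def comulDeformation (w : K[ε]) (s t : K) : K[ε] →ₗ[K] K[ε] ⊗[K] K[ε] :=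
  dualNumberComul K ∘ₗ LinearMap.mulRight K w +
    (s • sndHom K K + t • (fstHom K K K).toLinearMap).smulRight (1 ⊗ₜ 1)

@[simp]
theorem comulDeformation_apply (w a : K[ε]) (s t : K) :
    comulDeformation w s t a =
      dualNumberComul K (a * w) + (s * a.snd + t * a.fst) • (1 ⊗ₜ 1) := by
  simp [comulDeformation]

theorem d23_comulDeformation (w : K[ε]) (s t : K) :
    d23 K K[ε] (dualNumberComul K) (comulDeformation w s t) = 0 := by
  obtain ⟨x, y, rfl⟩ := exists_eq_smul_one_add_smul_eps w
  apply dualNumber_linearMap_ext_s13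
  · simp only [d23_apply, dualNumberComul_one, map_add, LinearMap.rTensor_tmul,
      comulDeformation_apply, mul_add, Algebra.mul_smul_comm, mul_one, one_mul, map_smul, smul_add,
      dualNumberComul_eps, snd_one, mul_zero, fst_one, zero_add, add_tmul, ← smul_tmul',
      eps_mul_eps, smul_zero, add_zero, snd_eps, fst_eps, LinearMap.lTensor_tmul, tmul_add,
      tmul_smul, assoc_symm_tmul, LinearMap.zero_apply]
    module
  · simp only [d23_apply, dualNumberComul_eps, LinearMap.rTensor_tmul, comulDeformation_apply,
      mul_add, Algebra.mul_smul_comm, mul_one, eps_mul_eps, smul_zero, add_zero, map_smul, snd_eps,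
      fst_eps, mul_zero, add_tmul, ← smul_tmul', map_add, dualNumberComul_one, smul_add,
      LinearMap.lTensor_tmul, tmul_add, tmul_smul, assoc_symm_tmul, LinearMap.zero_apply]
    module

theorem exists_eq_comulDeformation_of_d23_eq_zero {φ : K[ε] →ₗ[K] K[ε] ⊗[K] K[ε]}
    (h : d23 K K[ε] (dualNumberComul K) φ = 0) : ∃ w s t, φ = comulDeformation w s t := by
  obtain ⟨a, b, c, d, h1⟩ := exists_eq_sum_smul_tmul (φ 1)
  obtain ⟨a', b', c', d', hε⟩ := exists_eq_sum_smul_tmul (φ ε)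
  have eval_eps : d23 K K[ε] (dualNumberComul K) φ ε =
      b' • ((1 ⊗ₜ ε) ⊗ₜ ε) - c' • ((ε ⊗ₜ ε) ⊗ₜ 1) := by
    simp only [d23_apply, dualNumberComul_eps, LinearMap.rTensor_tmul, hε, add_tmul, ← smul_tmul',
      map_add, map_smul, dualNumberComul_one, smul_add, LinearMap.lTensor_tmul, tmul_add, tmul_smul,
      assoc_symm_tmul]
    module
  have eval_one : d23 K K[ε] (dualNumberComul K) φ 1 =
      (b - d') • ((1 ⊗ₜ ε) ⊗ₜ ε) + (d' - c) • ((ε ⊗ₜ ε) ⊗ₜ 1) +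
        b' • ((1 ⊗ₜ ε) ⊗ₜ 1 - (1 ⊗ₜ 1) ⊗ₜ ε) + c' • ((ε ⊗ₜ 1) ⊗ₜ 1 - (1 ⊗ₜ ε) ⊗ₜ 1) := by
    simp only [d23_apply, dualNumberComul_one, map_add, LinearMap.rTensor_tmul, h1, add_tmul,
      ← smul_tmul', hε, map_smul, smul_add, dualNumberComul_eps, LinearMap.lTensor_tmul, tmul_add,
      tmul_smul, assoc_symm_tmul]
    module
  let tripleBasis := ((dualNumberBasis K).tensorProduct (dualNumberBasis K)).tensorProduct
    (dualNumberBasis K)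
  obtain rfl : b' = 0 := by
    simpa [h, tripleBasis, eq_comm] using congrArg (tripleBasis.repr · ((0, 1), 1)) eval_eps
  obtain rfl : c' = 0 := by
    simpa [h, tripleBasis] using congrArg (tripleBasis.repr · ((1, 1), 0)) eval_eps
  obtain rfl : b = d' := by
    simpa [h, tripleBasis, sub_eq_zero, eq_comm] using
      congrArg (tripleBasis.repr · ((0, 1), 1)) eval_one
  obtain rfl : c = b := by
    simpa [h, tripleBasis, sub_eq_zero, eq_comm] using
      congrArg (tripleBasis.repr · ((1, 1), 0)) eval_one
  refine ⟨c • 1 + d • ε, a', a, dualNumber_linearMap_ext_s13 ?_ ?_⟩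
  · simp only [h1, comulDeformation_apply, one_mul, map_add, map_smul, dualNumberComul_one,
      smul_add, dualNumberComul_eps, snd_one, mul_zero, fst_one, mul_one, zero_add]
    module
  · simp only [hε, zero_smul, add_zero, comulDeformation_apply, mul_add, Algebra.mul_smul_comm,
      mul_one, eps_mul_eps, smul_zero, map_smul, dualNumberComul_eps, snd_eps, fst_eps, mul_zero]
    module

theorem d221_mulDeformation_comulDeformation_eq_zero_iff {u v w : K[ε]} {s t : K} :
    d221 K K[ε] (dualNumberComul K) (mulDeformation u v) (comulDeformation w s t) = 0 ↔
      s = v.fst ∧ t = -v.snd := by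
  rw [mulDeformation, comulDeformation, d221_add, d221_mulLeft_mulRight dualNumberComul_comp_mu,
    zero_add]
  obtain ⟨x, y, rfl⟩ := exists_eq_smul_one_add_smul_eps v
  constructor
  · intro h
    have eval_eps_one : (s - x) • (1 ⊗ₜ 1) - (t + y) • (ε ⊗ₜ 1) = (0 : K[ε] ⊗[K] K[ε]) := by
      refine .trans ?_ (LinearMap.congr_fun h (ε ⊗ₜ 1))
      simp only [d221_tmul, LinearMap.coe_smulRight, LinearMap.coe_comp, Function.comp_apply,
        map_tmul, sndHom_apply, snd_eps, snd_one, tmul_zero, map_zero, smul_add, zero_smul,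
        add_zero, mul_one, LinearMap.add_apply, LinearMap.smul_apply, smul_eq_mul,
        AlgHom.toLinearMap_apply, fstHom_apply, fst_eps, mul_zero, zero_add, dualNumberComul_one,
        tmul_add, map_add, assoc_symm_tmul, LinearMap.rTensor_tmul, zero_tmul, LinearMap.mul'_apply,
        one_smul, add_tmul, ← smul_tmul', fst_one, tmul_smul, map_smul]
      module
    let tensorBasis := (dualNumberBasis K).tensorProduct (dualNumberBasis K)
    have hs : s = x := by
      simpa [tensorBasis, sub_eq_zero] using congrArg (tensorBasis.repr · (0, 0)) eval_eps_one
    have ht : t = -y := by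
      simpa [tensorBasis, ← neg_add_rev, add_eq_zero_iff_eq_neg] using
        congrArg (tensorBasis.repr · (1, 0)) eval_eps_one
    simp [hs, ht]
  · rintro ⟨rfl, rfl⟩
    apply dualNumber_tensor_linearMap_ext <;>
      simp [d221_tmul, add_tmul, tmul_add, tmul_neg, ← smul_tmul']

variable (K) in
/-- The parametrisation of the Frobenius 2-cocycles of `K[ε]` by triples `(u, v, w)`. -/
def dualNumberTwoCocycle : K[ε] × K[ε] × K[ε] →ₗ[K]
    (K[ε] ⊗[K] K[ε] →ₗ[K] K[ε]) × (K[ε] →ₗ[K] K[ε] ⊗[K] K[ε]) where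
  toFun p := (mulDeformation p.1 p.2.1, comulDeformation p.2.2 p.2.1.fst (-p.2.1.snd))
  map_add' p q := by
    refine Prod.ext (TensorProduct.ext' fun a b ↦ ?_) (LinearMap.ext fun a ↦ ?_)
    · simp only [Prod.fst_add, Prod.snd_add, mulDeformation_tmul, add_mul, smul_add, Prod.mk_add_mk,
        LinearMap.add_apply]
      abel
    · simp only [Prod.snd_add, Prod.fst_add, fst_add, snd_add, neg_add_rev, comulDeformation_apply,
        mul_add, map_add, Prod.mk_add_mk, LinearMap.add_apply, neg_mul]
      module
  map_smul' c p := by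
    refine Prod.ext (TensorProduct.ext' fun a b ↦ ?_) (LinearMap.ext fun a ↦ ?_)
    · simp only [Prod.smul_fst, Prod.smul_snd, mulDeformation_tmul, Algebra.smul_mul_assoc,
        RingHom.id_apply, Prod.smul_mk, LinearMap.smul_apply, smul_add, add_right_inj]
      module
    · simp only [Prod.smul_snd, Prod.smul_fst, fst_smul, smul_eq_mul, snd_smul,
        comulDeformation_apply, Algebra.mul_smul_comm, map_smul, neg_mul, RingHom.id_apply,
        Prod.smul_mk, LinearMap.smul_apply, smul_add, add_right_inj]
      module

theorem range_dualNumberTwoCocycle : LinearMap.range (dualNumberTwoCocycle K) =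
    frobeniusTwoCocycles K K[ε] (dualNumberComul K) := by
  ext ⟨φ₁, φ₂⟩
  rw [mem_frobeniusTwoCocycles]
  constructor
  · rintro ⟨⟨u, v, w⟩, h⟩
    obtain ⟨rfl, rfl⟩ := Prod.ext_iff.mp h
    exact ⟨d21_mulDeformation u v,
      d221_mulDeformation_comulDeformation_eq_zero_iff.mpr ⟨rfl, rfl⟩, d23_comulDeformation ..⟩
  · rintro ⟨h₁, h₂, h₃⟩
    obtain ⟨u, v, rfl⟩ : ∃ u v, φ₁ = mulDeformation u v :=
      ⟨_, _, eq_mulDeformation_of_d21_eq_zero h₁⟩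
    obtain ⟨w, s, t, rfl⟩ := exists_eq_comulDeformation_of_d23_eq_zero h₃
    obtain ⟨rfl, rfl⟩ := d221_mulDeformation_comulDeformation_eq_zero_iff.mp h₂
    exact ⟨(u, v, w), rfl⟩

theorem dualNumberTwoCocycle_injective : Function.Injective (dualNumberTwoCocycle K) := by
  rw [injective_iff_map_eq_zero]
  rintro ⟨u, v, w⟩ h
  obtain ⟨h₁, h₂⟩ := Prod.ext_iff.mp h
  have hu : u = 0 := by simpa [dualNumberTwoCocycle] using LinearMap.congr_fun h₁ (1 ⊗ₜ 1)
  have hv : v = 0 := by simpa [dualNumberTwoCocycle, hu] using LinearMap.congr_fun h₁ (ε ⊗ₜ ε)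
  have hw : dualNumberComul K w = 0 := by
    simpa [dualNumberTwoCocycle, hv] using LinearMap.congr_fun h₂ 1
  rw [hu, hv, (map_eq_zero_iff _ dualNumberComul_injective).mp hw]
  rfl

theorem finrank_frobeniusTwoCocycles_dualNumber :
    Module.finrank K (frobeniusTwoCocycles K K[ε] (dualNumberComul K)) = 6 := by
  have := Module.Finite.of_basis (dualNumberBasis K)
  rw [← range_dualNumberTwoCocycle,
    LinearMap.finrank_range_of_inj dualNumberTwoCocycle_injective, Module.finrank_prod,
    Module.finrank_prod, finrank_dualNumber]

end Cocycles

end DualNumber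

/-- for the Frobenius algebra `A = k[x]/(x²)` (dual numbers, with
`Δ(1) = 1⊗x + x⊗1`, `Δ(x) = x⊗x` where `x = ε`), the space `Z²_f(A;A)` of Frobenius
2-cocycles — pairs `(φ₁,φ₂)` with `d^{2,1}(φ₁) = 0`, `d^{2,2}_{(1)}(φ₁,φ₂) = 0`,
`d^{2,3}(φ₂) = 0` — has dimension 6 over `k`: it is the span of 6 linearly independent
vectors. -/
theorem dualNumber_Z2_dim_six (K : Type*) [Field K]
    (Δ : DualNumber K →ₗ[K] DualNumber K ⊗[K] DualNumber K)
    (hΔ1 : Δ 1 = (1 : DualNumber K) ⊗ₜ[K] (DualNumber.eps : DualNumber K) +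
      (DualNumber.eps : DualNumber K) ⊗ₜ[K] (1 : DualNumber K))
    (hΔx : Δ DualNumber.eps =
      (DualNumber.eps : DualNumber K) ⊗ₜ[K] (DualNumber.eps : DualNumber K)) :
    ∃ f : Fin 6 → (DualNumber K ⊗[K] DualNumber K →ₗ[K] DualNumber K) ×
        (DualNumber K →ₗ[K] DualNumber K ⊗[K] DualNumber K),
      LinearIndependent K f ∧
      ∀ p : (DualNumber K ⊗[K] DualNumber K →ₗ[K] DualNumber K) ×
          (DualNumber K →ₗ[K] DualNumber K ⊗[K] DualNumber K),
        (d21 K (DualNumber K) p.1 = 0 ∧ d221 K (DualNumber K) Δ p.1 p.2 = 0 ∧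
          d23 K (DualNumber K) Δ p.2 = 0) ↔
        p ∈ Submodule.span K (Set.range f) := by
  obtain rfl : Δ = dualNumberComul K := dualNumber_linearMap_ext_s13 (by simp [hΔ1]) (by simp [hΔx])
  obtain ⟨f, hf, hspan⟩ :=
    exists_linearIndependent_span_range_eq (finrank_frobeniusTwoCocycles_dualNumber (K := K))
  exact ⟨f, hf, fun p ↦ by rw [hspan, mem_frobeniusTwoCocycles]⟩
end
end
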